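/- Let (A, α_A) be a Hom-associative algebra over a field K of characteristic 0 satisfying the α-identity condition [a,b] = [α_A(a), b] for all a,b ∈ A. Then there is an exact sequence of vector spaces A⋆HC₁^α(A) → Ker(ψ₂ : A⋆L^α(A) → L^α(A)) → Ker(ψ₃ : A⋆[A,A] → [A,A]) → HC₁^α(A) → HC₁^M(A, α_A) → [A,A]/[A,[A,A]] → 0, where A is regarded as a Hom-Lie algebra via the commutator bracket, ⋆ denotes the Hom-Lie tensor product with respect to the Hom-actions induced by the commutator, ψ₂ and ψ₃ are the canonical homomorphisms m⋆n ↦ ᵐn, the first two maps are induced by the inclusion HC₁^α(A) ↪ L^α(A) and the projection L^α(A) ↠ [A,A] respectively, the map Ker(ψ₃) → HC₁^α(A) is the connecting homomorphism of the snake lemma, and the last two maps are the canonical projections. -/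

import Mathlib

open TensorProduct

/-- A (multiplicative) Hom-Lie algebra structure on a vector space `L` over a field `K`:
a bilinear bracket satisfying skew-symmetry and the Hom-Jacobi identity, together with a
linear endomorphism preserving the bracket. -/
structure HomLieStr (K : Type) [Field K] (L : Type) [AddCommGroup L] [Module K L] : Type where
  br : L →ₗ[K] L →ₗ[K] L
  α : L →ₗ[K] L
  skew : ∀ x y, br x y = - br y x
  jacobi : ∀ x y z, br (α x) (br y z) + br (α z) (br x y) + br (α y) (br z x) = 0
  αbr : ∀ x y, α (br x y) = br (α x) (α y)

/-- A Hom-action of the Hom-Lie algebra `(L, HL)` on the Hom-Lie algebra `(M, HM)`. -/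
structure HomAction {K L M : Type} [Field K] [AddCommGroup L] [Module K L]
    [AddCommGroup M] [Module K M] (HL : HomLieStr K L) (HM : HomLieStr K M) : Type where
  act : L →ₗ[K] M →ₗ[K] M
  ax1 : ∀ x y m, act (HL.br x y) (HM.α m) = act (HL.α x) (act y m) - act (HL.α y) (act x m)
  ax2 : ∀ x m m', act (HL.α x) (HM.br m m') =
    HM.br (act x m) (HM.α m') + HM.br (HM.α m) (act x m')
  ax3 : ∀ x m, HM.α (act x m) = act (HL.α x) (HM.α m)

/-- A homomorphism of Hom-Lie algebras: a linear map preserving brackets and commuting with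
the structure endomorphisms. -/
def IsHomLieHom {K L L' : Type} [Field K] [AddCommGroup L] [Module K L]
    [AddCommGroup L'] [Module K L'] (HL : HomLieStr K L) (HL' : HomLieStr K L')
    (f : L →ₗ[K] L') : Prop :=
  (∀ x y, f (HL.br x y) = HL'.br (f x) (f y)) ∧ (∀ x, f (HL.α x) = HL'.α (f x))

/-- Compatibility of two Hom-actions of `(M, HM)` and `(N, HN)` on each other. -/
def Compatible {K M N : Type} [Field K] [AddCommGroup M] [Module K M]
    [AddCommGroup N] [Module K N] {HM : HomLieStr K M} {HN : HomLieStr K N}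
    (aMN : HomAction HM HN) (aNM : HomAction HN HM) : Prop :=
  (∀ m n m', aNM.act (aMN.act m n) m' = HM.br m' (aNM.act n m)) ∧
  (∀ n m n', aMN.act (aNM.act n m) n' = HN.br n' (aMN.act m n))

/-- The subspace `D(M,N)` of `M ⊗ N` from the definition of the non-abelian tensor product
of Hom-Lie algebras. -/
def Dsub {K M N : Type} [Field K] [AddCommGroup M] [Module K M] [AddCommGroup N] [Module K N]
    (brM : M →ₗ[K] M →ₗ[K] M) (αM : M →ₗ[K] M)
    (brN : N →ₗ[K] N →ₗ[K] N) (αN : N →ₗ[K] N)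
    (actMN : M →ₗ[K] N →ₗ[K] N) (actNM : N →ₗ[K] M →ₗ[K] M) : Submodule K (M ⊗[K] N) :=
  Submodule.span K
    ({x | ∃ m m' n, x = brM m m' ⊗ₜ[K] αN n - αM m ⊗ₜ[K] actMN m' n + αM m' ⊗ₜ[K] actMN m n} ∪
     {x | ∃ m n n', x = αM m ⊗ₜ[K] brN n n' - actNM n' m ⊗ₜ[K] αN n + actNM n m ⊗ₜ[K] αN n'} ∪
     {x | ∃ m n, x = actNM n m ⊗ₜ[K] actMN m n} ∪
     {x | ∃ m m' n n', x = actNM n m ⊗ₜ[K] actMN m' n' + actNM n' m' ⊗ₜ[K] actMN m n} ∪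
     {x | ∃ m m' m'' n n' n'', x =
        brM (actNM n m) (actNM n' m') ⊗ₜ[K] αN (actMN m'' n'') +
        brM (actNM n' m') (actNM n'' m'') ⊗ₜ[K] αN (actMN m n) +
        brM (actNM n'' m'') (actNM n m) ⊗ₜ[K] αN (actMN m' n')})

/-- `T` is "the" Hom-Lie tensor product structure on the quotient `(M ⊗ N) ⧸ D` :
`D` is the subspace `D(M,N)`, the bracket is given on generators by
`[m⋆n, m'⋆n'] = -(ⁿm)⋆(^{m'}n')`, and the endomorphism is induced by `α_M ⊗ α_N`. -/
def IsStarStruct {K M N : Type} [Field K] [AddCommGroup M] [Module K M]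
    [AddCommGroup N] [Module K N] (HM : HomLieStr K M) (HN : HomLieStr K N)
    (aMN : HomAction HM HN) (aNM : HomAction HN HM)
    (D : Submodule K (M ⊗[K] N)) (T : HomLieStr K ((M ⊗[K] N) ⧸ D)) : Prop :=
  D = Dsub HM.br HM.α HN.br HN.α aMN.act aNM.act ∧
  (∀ m n m' n', T.br (D.mkQ (m ⊗ₜ[K] n)) (D.mkQ (m' ⊗ₜ[K] n')) =
      - D.mkQ (aNM.act n m ⊗ₜ[K] aMN.act m' n')) ∧
  (∀ m n, T.α (D.mkQ (m ⊗ₜ[K] n)) = D.mkQ (HM.α m ⊗ₜ[K] HN.α n))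

/-- A (multiplicative) Hom-associative algebra structure on a vector space `A`. -/
structure HomAssocStr (K : Type) [Field K] (A : Type) [AddCommGroup A] [Module K A] : Type where
  mul : A →ₗ[K] A →ₗ[K] A
  α : A →ₗ[K] A
  hassoc : ∀ a b c, mul (α a) (mul b c) = mul (mul a b) (α c)
  αmul : ∀ a b, α (mul a b) = mul (α a) (α b)

/-- The subspace `J(A,α)` of `A ⊗ A`; the quotient `(A⊗A)/J(A,α)` is `L^α(A)`, and the
first cyclic homology `HC₁^α(A)` is the kernel of `L^α(A) → A`, `a⊗b ↦ ab − ba`. -/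
def Jsub {K A : Type} [Field K] [AddCommGroup A] [Module K A] (HA : HomAssocStr K A) :
    Submodule K (A ⊗[K] A) :=
  Submodule.span K
    ({x | ∃ a b, x = a ⊗ₜ[K] b + b ⊗ₜ[K] a} ∪
     {x | ∃ a b c, x = HA.mul a b ⊗ₜ[K] HA.α c - HA.α a ⊗ₜ[K] HA.mul b c
        + HA.mul c a ⊗ₜ[K] HA.α b})

/-- The subspace of relations defining the first Milnor cyclic homology
`HC₁^M(A, α_A) = (A⊗A)/⟨a⊗b + b⊗a, ab⊗α(c) − α(a)⊗bc + ca⊗α(b), α(a)⊗bc − α(a)⊗cb⟩`. -/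
def MilnorSub {K A : Type} [Field K] [AddCommGroup A] [Module K A] (HA : HomAssocStr K A) :
    Submodule K (A ⊗[K] A) :=
  Submodule.span K
    ({x | ∃ a b, x = a ⊗ₜ[K] b + b ⊗ₜ[K] a} ∪
     {x | ∃ a b c, x = HA.mul a b ⊗ₜ[K] HA.α c - HA.α a ⊗ₜ[K] HA.mul b c
        + HA.mul c a ⊗ₜ[K] HA.α b} ∪
     {x | ∃ a b c, x = HA.α a ⊗ₜ[K] HA.mul b c - HA.α a ⊗ₜ[K] HA.mul c b})

/-- The subspace `[A,A]` of `A` spanned by all commutators. -/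
def commSub {K A : Type} [Field K] [AddCommGroup A] [Module K A] (HA : HomAssocStr K A) :
    Submodule K A :=
  Submodule.span K {x | ∃ a b, x = HA.mul a b - HA.mul b a}

/-- The subspace `[A,[A,A]]` of `A`. -/
def commSub2 {K A : Type} [Field K] [AddCommGroup A] [Module K A] (HA : HomAssocStr K A) :
    Submodule K A :=
  Submodule.span K {x | ∃ a, ∃ t ∈ commSub HA, x = HA.mul a t - HA.mul t a}

/-!
The operation `A ⋆ -` is right exact: the relations `D(A, [A,A])` are the image of the relations
`D(A, L^α(A))` under the surjection `L^α(A) → [A,A]`, so the kernel of `A⋆L^α(A) → A⋆[A,A]` is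
the image of `A ⊗ HC₁^α(A)`. Modulo `J(A,α)` the action of `A` on `L^α(A)` is
`ᵃt = α(a) ⊗ ψ(t)`; hence `A` acts trivially on `HC₁^α(A)`, and, by the `α`-identity, `ψ` is
equivariant. The snake lemma for `ψ₂` and `ψ₃` gives exactness at the two kernels.

The formula for the action also shows that the image of `ψ₂` consists of the Milnor relations
modulo `J(A,α)`, which is exactness at `HC₁^α(A)`, and that `ψ` maps this image onto
`[A,[A,A]]`. Exactness at `HC₁^M(A, α_A)` is then a diagram chase in
`0 → HC₁^α(A) → L^α(A) → [A,A] → 0`.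
-/

section DiagramChases

variable {R X Y L C Q S : Type*} [Ring R] [AddCommGroup X] [Module R X] [AddCommGroup Y]
  [Module R Y] [AddCommGroup L] [Module R L] [AddCommGroup C] [Module R C] [AddCommGroup Q]
  [Module R Q] [AddCommGroup S] [Module R S]

/-- `δ : N → H` is the connecting homomorphism of the snake lemma: it sends `g x` to `f x`.
Here `f` is the middle vertical map, `g` the top right horizontal map, `N` the kernel of the right
vertical map and `H` the kernel of the bottom right horizontal map; the two outer maps enter only
through these kernels. -/
def IsConnecting (g : X →ₗ[R] Y) (f : X →ₗ[R] L) {N : Submodule R Y} {H : Submodule R L}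
    (δ : N →ₗ[R] H) : Prop :=
  ∀ x (hN : g x ∈ N) (hH : f x ∈ H), δ ⟨g x, hN⟩ = ⟨f x, hH⟩

namespace IsConnecting

variable {g : X →ₗ[R] Y} {f : X →ₗ[R] L} {N : Submodule R Y} {H : Submodule R L} {δ : N →ₗ[R] H}

theorem range_eq_ker (hδ : IsConnecting g f δ) (hg : Function.Surjective g)
    (hNH : N.comap g = H.comap f) {F : LinearMap.ker f →ₗ[R] N} (hF : ∀ x, (F x : Y) = g x) :
    LinearMap.range F = LinearMap.ker δ := by
  have hmem (x : X) : g x ∈ N ↔ f x ∈ H := SetLike.ext_iff.1 hNH x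
  apply le_antisymm
  · rintro _ ⟨x, rfl⟩
    have hN : g x ∈ N := hF x ▸ (F x).2
    have hFx : F x = ⟨g x, hN⟩ := Subtype.ext (hF x)
    rw [LinearMap.mem_ker, hFx, hδ x hN ((hmem x).1 hN)]
    exact Subtype.ext x.2
  · rintro ⟨y, hy⟩ hker
    obtain ⟨x, rfl⟩ := hg y
    rw [LinearMap.mem_ker, hδ x hy ((hmem x).1 hy)] at hker
    exact ⟨⟨x, congrArg Subtype.val hker⟩, Subtype.ext (hF _)⟩

theorem range_eq_comap (hδ : IsConnecting g f δ) (hg : Function.Surjective g)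
    (hNH : N.comap g = H.comap f) :
    LinearMap.range δ = (LinearMap.range f).comap H.subtype := by
  have hmem (x : X) : g x ∈ N ↔ f x ∈ H := SetLike.ext_iff.1 hNH x
  apply le_antisymm
  · rintro _ ⟨⟨y, hy⟩, rfl⟩
    obtain ⟨x, rfl⟩ := hg y
    exact ⟨x, by rw [hδ x hy ((hmem x).1 hy)]; rfl⟩
  · rintro ⟨_, hH⟩ ⟨x, rfl⟩
    exact ⟨⟨g x, (hmem x).2 hH⟩, hδ x _ hH⟩

end IsConnecting

theorem range_eq_ker_of_range_subtype_comp {g : X →ₗ[R] Y} {P : Submodule R X} {N : Submodule R Y}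
    {F : P →ₗ[R] N} (hF : ∀ x, (F x : Y) = g x) {F' : L →ₗ[R] P}
    (hF' : LinearMap.range (P.subtype ∘ₗ F') = LinearMap.ker g) :
    LinearMap.range F' = LinearMap.ker F := by
  rw [← Submodule.comap_map_eq_of_injective P.injective_subtype (LinearMap.range F'),
    ← LinearMap.range_comp, hF']
  ext x
  simp [← hF]

theorem ker_mapQ_of_map_eq {D : Submodule R X} {E : Submodule R Y} {f : X →ₗ[R] Y}
    (h : D.map f = E) :
    LinearMap.ker (D.mapQ E f (Submodule.map_le_iff_le_comap.1 h.le)) =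
      (LinearMap.ker f).map D.mkQ := by
  rw [Submodule.ker_mapQ, ← h, Submodule.comap_map_eq, Submodule.map_sup, Submodule.mkQ_map_self,
    bot_sup_eq]

theorem ker_eq_map_ker_of_comp_eq {π : L →ₗ[R] Q} {q : C →ₗ[R] S} {p : L →ₗ[R] C}
    {F : Q →ₗ[R] S} (hπ : Function.Surjective π) (hF : F ∘ₗ π = q ∘ₗ p)
    (hq : LinearMap.ker q = (LinearMap.ker π).map p) :
    LinearMap.ker F = (LinearMap.ker p).map π :=
  calc LinearMap.ker F
      = (LinearMap.ker (F ∘ₗ π)).map π := by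
        rw [LinearMap.ker_comp, Submodule.map_comap_eq_of_surjective hπ]
    _ = (LinearMap.ker π ⊔ LinearMap.ker p).map π := by
        rw [hF, LinearMap.ker_comp, hq, Submodule.comap_map_eq]
    _ = (LinearMap.ker p).map π := by
        rw [Submodule.map_sup, LinearMap.le_ker_iff_map.1 le_rfl, bot_sup_eq]

end DiagramChases

section StarProduct

variable {K M N N' : Type} [Field K] [AddCommGroup M] [Module K M] [AddCommGroup N] [Module K N]
  [AddCommGroup N'] [Module K N'] {HM : HomLieStr K M} {HN : HomLieStr K N}
  {HN' : HomLieStr K N'}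

/-- The subspace `D(M,N)` of `M ⊗ N` attached to a pair of Hom-actions, with `M⋆N = (M ⊗ N)/D(M,N)`;
reducible, so that it agrees with `Dsub` applied to the underlying linear maps. -/
abbrev starSub (aMN : HomAction HM HN) (aNM : HomAction HN HM) : Submodule K (M ⊗[K] N) :=
  Dsub HM.br HM.α HN.br HN.α aMN.act aNM.act

/-- A homomorphism `p : N → N'` of Hom-Lie algebras compatible with Hom-actions of `M` on both
and of both on `M`: the morphisms along which `M⋆N` is functorial in `N`. -/
structure IsEquivariantHom (aMN : HomAction HM HN) (aNM : HomAction HN HM)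
    (aMN' : HomAction HM HN') (aNM' : HomAction HN' HM) (p : N →ₗ[K] N') : Prop where
  isHomLieHom : IsHomLieHom HN HN' p
  map_act : ∀ m n, p (aMN.act m n) = aMN'.act m (p n)
  act_map : ∀ n m, aNM'.act (p n) m = aNM.act n m

namespace IsEquivariantHom

variable {aMN : HomAction HM HN} {aNM : HomAction HN HM} {aMN' : HomAction HM HN'}
  {aNM' : HomAction HN' HM} {p : N →ₗ[K] N'}

theorem map_starSub (hp : IsEquivariantHom aMN aNM aMN' aNM' p) (hsurj : Function.Surjective p) :
    (starSub aMN aNM).map (p.lTensor M) = starSub aMN' aNM' := by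
  obtain ⟨⟨map_br, map_α⟩, map_act, act_map⟩ := hp
  simp only [starSub, Dsub, Submodule.map_span, Set.image_union]
  congr 5 <;> ext x <;>
    simp [hsurj.exists, map_br, map_α, map_act, act_map, eq_comm (a := x)]

/-- The linear map `M⋆N → M⋆N'`, `m⋆n ↦ m⋆p(n)`, induced by a surjective equivariant
homomorphism `p`. -/
def starMap (hp : IsEquivariantHom aMN aNM aMN' aNM' p) (hsurj : Function.Surjective p) :
    (M ⊗[K] N) ⧸ starSub aMN aNM →ₗ[K] (M ⊗[K] N') ⧸ starSub aMN' aNM' :=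
  (starSub aMN aNM).mapQ _ (p.lTensor M) (Submodule.map_le_iff_le_comap.1 (hp.map_starSub hsurj).le)

theorem starMap_surjective (hp : IsEquivariantHom aMN aNM aMN' aNM' p)
    (hsurj : Function.Surjective p) : Function.Surjective (hp.starMap hsurj) := by
  rw [← LinearMap.range_eq_top, starMap, Submodule.range_mapQ,
    LinearMap.range_eq_top.2 (LinearMap.lTensor_surjective M hsurj), Submodule.map_top,
    Submodule.range_mkQ]

theorem ker_starMap (hp : IsEquivariantHom aMN aNM aMN' aNM' p) (hsurj : Function.Surjective p)
    {P : Type*} [AddCommGroup P] [Module K P] {ι : P →ₗ[K] N} (hιp : Function.Exact ι p) :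
    LinearMap.ker (hp.starMap hsurj) =
      LinearMap.range ((starSub aMN aNM).mkQ ∘ₗ ι.lTensor M) := by
  rw [starMap, ker_mapQ_of_map_eq (hp.map_starSub hsurj),
    (lTensor_exact M hιp hsurj).linearMap_ker_eq, LinearMap.range_comp]

theorem range_eq_ker_of_starMap (hp : IsEquivariantHom aMN aNM aMN' aNM' p)
    (hsurj : Function.Surjective p) {P : Type*} [AddCommGroup P] [Module K P] {ι : P →ₗ[K] N}
    (hιp : Function.Exact ι p) {D : Submodule K (M ⊗[K] P)}
    {H : Submodule K ((M ⊗[K] N) ⧸ starSub aMN aNM)}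
    {H' : Submodule K ((M ⊗[K] N') ⧸ starSub aMN' aNM')} {F : (M ⊗[K] P) ⧸ D →ₗ[K] H}
    (hF : ∀ m x, (F (D.mkQ (m ⊗ₜ x)) : _ ⧸ _) = (starSub aMN aNM).mkQ (m ⊗ₜ ι x))
    {F' : H →ₗ[K] H'} (hF' : ∀ x, (F' x : _ ⧸ _) = hp.starMap hsurj x) :
    LinearMap.range F = LinearMap.ker F' := by
  have hFι : (H.subtype ∘ₗ F) ∘ₗ D.mkQ = (starSub aMN aNM).mkQ ∘ₗ ι.lTensor M :=
    TensorProduct.ext' hF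
  refine range_eq_ker_of_range_subtype_comp hF' ?_
  rw [hp.ker_starMap hsurj hιp, ← hFι, LinearMap.range_comp_of_range_eq_top _ D.range_mkQ]

theorem comp_starMap (hp : IsEquivariantHom aMN aNM aMN' aNM' p) (hsurj : Function.Surjective p)
    {ψ : (M ⊗[K] N) ⧸ starSub aMN aNM →ₗ[K] N}
    (hψ : ∀ m n, ψ ((starSub aMN aNM).mkQ (m ⊗ₜ n)) = aMN.act m n)
    {ψ' : (M ⊗[K] N') ⧸ starSub aMN' aNM' →ₗ[K] N'}
    (hψ' : ∀ m n, ψ' ((starSub aMN' aNM').mkQ (m ⊗ₜ n)) = aMN'.act m n) :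
    ψ' ∘ₗ hp.starMap hsurj = p ∘ₗ ψ := by
  refine Submodule.linearMap_qext _ (TensorProduct.ext' fun m n => ?_)
  exact (hψ' m (p n)).trans ((hp.map_act m n).symm.trans (congrArg p (hψ m n).symm))

theorem starMap_mem_ker (hp : IsEquivariantHom aMN aNM aMN' aNM' p) (hsurj : Function.Surjective p)
    {ψ : (M ⊗[K] N) ⧸ starSub aMN aNM →ₗ[K] N}
    (hψ : ∀ m n, ψ ((starSub aMN aNM).mkQ (m ⊗ₜ n)) = aMN.act m n)
    {ψ' : (M ⊗[K] N') ⧸ starSub aMN' aNM' →ₗ[K] N'}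
    (hψ' : ∀ m n, ψ' ((starSub aMN' aNM').mkQ (m ⊗ₜ n)) = aMN'.act m n)
    (x : LinearMap.ker ψ) : hp.starMap hsurj x ∈ LinearMap.ker ψ' :=
  (LinearMap.congr_fun (hp.comp_starMap hsurj hψ hψ') x.1).trans (by simp)

end IsEquivariantHom

theorem range_eq_range_lift_act {aMN : HomAction HM HN} {aNM : HomAction HN HM}
    {ψ : (M ⊗[K] N) ⧸ starSub aMN aNM →ₗ[K] N}
    (hψ : ∀ m n, ψ ((starSub aMN aNM).mkQ (m ⊗ₜ n)) = aMN.act m n) :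
    LinearMap.range ψ = LinearMap.range (TensorProduct.lift aMN.act) := by
  rw [← LinearMap.range_comp_of_range_eq_top ψ (Submodule.range_mkQ _)]
  exact congrArg LinearMap.range (TensorProduct.ext' hψ)

end StarProduct

namespace HomAssocStr

variable {K A : Type} [Field K] [AddCommGroup A] [Module K A] (HA : HomAssocStr K A)

/-- The vector space `L^α(A) = (A ⊗ A)/J(A,α)`; reducible, so that it inherits the structure of
the quotient. -/
abbrev LAlpha : Type := (A ⊗[K] A) ⧸ Jsub HA

/-- The commutator bracket `[a,b] = ab - ba` as a bilinear map. -/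
def comm : A →ₗ[K] A →ₗ[K] A := HA.mul - HA.mul.flip

theorem comm_apply (a b : A) : HA.comm a b = HA.mul a b - HA.mul b a := rfl

theorem α_comm (a b : A) : HA.α (HA.comm a b) = HA.comm (HA.α a) (HA.α b) := by
  rw [comm_apply, map_sub, HA.αmul, HA.αmul, comm_apply]

theorem Jsub_le_ker_lift_comm : Jsub HA ≤ LinearMap.ker (TensorProduct.lift HA.comm) := by
  refine Submodule.span_le.2 ?_
  rintro _ (⟨a, b, rfl⟩ | ⟨a, b, c, rfl⟩)
  · simp [comm_apply]
  · simp [comm_apply, HA.hassoc a b c, HA.hassoc b c a, HA.hassoc c a b]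

/-- The homomorphism `ψ : L^α(A) → A`, `a ⊗ b ↦ [a,b]`, with kernel `HC₁^α(A)` and range
`[A,A]`. -/
def commMap : HA.LAlpha →ₗ[K] A := (Jsub HA).liftQ (TensorProduct.lift HA.comm)
  HA.Jsub_le_ker_lift_comm

theorem commMap_mkQ_tmul (a b : A) : HA.commMap ((Jsub HA).mkQ (a ⊗ₜ b)) = HA.comm a b := rfl

theorem range_commMap : LinearMap.range HA.commMap = commSub HA := by
  rw [commMap, Submodule.range_liftQ, LinearMap.range_eq_map, ← TensorProduct.span_tmul_eq_top,
    Submodule.map_span, commSub]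
  congr 1
  ext x
  simp [comm_apply, eq_comm (a := x)]

theorem commMap_mem_commSub (t : HA.LAlpha) : HA.commMap t ∈ commSub HA :=
  HA.range_commMap ▸ LinearMap.mem_range_self _ t

/-- The projection `L^α(A) → [A,A]`: the map `commMap` with its codomain restricted. -/
def toCommSub : HA.LAlpha →ₗ[K] commSub HA := HA.commMap.codRestrict _ HA.commMap_mem_commSub

theorem toCommSub_surjective : Function.Surjective HA.toCommSub := by
  rw [← LinearMap.range_eq_top, toCommSub, LinearMap.range_codRestrict, range_commMap,
    Submodule.comap_subtype_self]

theorem ker_toCommSub : LinearMap.ker HA.toCommSub = LinearMap.ker HA.commMap :=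
  LinearMap.ker_codRestrict _ _ _

theorem exact_subtype_toCommSub :
    Function.Exact (LinearMap.ker HA.commMap).subtype HA.toCommSub := by
  rw [LinearMap.exact_iff, ker_toCommSub, Submodule.range_subtype]

theorem mkQ_comm_tmul_add (a b c : A) :
    (Jsub HA).mkQ (HA.comm a b ⊗ₜ[K] HA.α c) + (Jsub HA).mkQ (HA.α b ⊗ₜ[K] HA.comm a c) =
      (Jsub HA).mkQ (HA.α a ⊗ₜ[K] HA.comm b c) := by
  have skew (x y : A) : (Jsub HA).mkQ (x ⊗ₜ[K] y) = -(Jsub HA).mkQ (y ⊗ₜ[K] x) := by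
    rw [eq_neg_iff_add_eq_zero, ← map_add]
    exact (Submodule.Quotient.mk_eq_zero _).2 (Submodule.subset_span (.inl ⟨x, y, rfl⟩))
  have cyclic (x y z : A) : (Jsub HA).mkQ (HA.mul x y ⊗ₜ[K] HA.α z)
      - (Jsub HA).mkQ (HA.α x ⊗ₜ[K] HA.mul y z) + (Jsub HA).mkQ (HA.mul z x ⊗ₜ[K] HA.α y) = 0 := by
    rw [← map_sub, ← map_add]
    exact (Submodule.Quotient.mk_eq_zero _).2 (Submodule.subset_span (.inr ⟨x, y, z, rfl⟩))
  have hbc := cyclic a b c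
  have hcb := cyclic a c b
  simp only [comm_apply, sub_tmul, tmul_sub, map_sub]
  rw [skew (HA.α b), skew (HA.α b)]
  linear_combination (norm := module) hbc - hcb

/-- The action of `A` on `L^α(A)`, written as `ᵃt = α(a) ⊗ ψ(t)`. -/
def adAct : A →ₗ[K] HA.LAlpha →ₗ[K] HA.LAlpha :=
  ((TensorProduct.mk K A A).compr₂ (Jsub HA).mkQ).compl₁₂ HA.α HA.commMap

theorem adAct_apply (a : A) (t : HA.LAlpha) :
    HA.adAct a t = (Jsub HA).mkQ (HA.α a ⊗ₜ[K] HA.commMap t) := rfl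

theorem adAct_of_mem_ker (a : A) {t : HA.LAlpha} (ht : t ∈ LinearMap.ker HA.commMap) :
    HA.adAct a t = 0 := by
  rw [adAct_apply, LinearMap.mem_ker.1 ht, tmul_zero, map_zero]

theorem Jsub_le_MilnorSub : Jsub HA ≤ MilnorSub HA := Submodule.span_mono Set.subset_union_left

theorem tmul_mem_MilnorSub (a : A) {c : A} (hc : c ∈ commSub HA) :
    HA.α a ⊗ₜ[K] c ∈ MilnorSub HA := by
  suffices h : commSub HA ≤ (MilnorSub HA).comap (TensorProduct.mk K A A (HA.α a)) from h hc
  refine Submodule.span_le.2 ?_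
  rintro _ ⟨b, c, rfl⟩
  exact Submodule.subset_span (.inr ⟨a, b, c, tmul_sub _ _ _⟩)

theorem map_mkQ_MilnorSub :
    (MilnorSub HA).map (Jsub HA).mkQ = LinearMap.range (TensorProduct.lift HA.adAct) := by
  apply le_antisymm
  · rw [MilnorSub, Submodule.span_union, ← Jsub, Submodule.map_sup, Submodule.mkQ_map_self,
      bot_sup_eq, Submodule.map_span_le]
    rintro _ ⟨a, b, c, rfl⟩
    refine ⟨a ⊗ₜ[K] (Jsub HA).mkQ (b ⊗ₜ[K] c), ?_⟩
    rw [TensorProduct.lift.tmul, adAct_apply, commMap_mkQ_tmul, comm_apply, tmul_sub]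
  · rintro _ ⟨x, rfl⟩
    induction x with
    | zero => simp
    | add x y hx hy => exact map_add (TensorProduct.lift HA.adAct) x y ▸ add_mem hx hy
    | tmul a t =>
      exact Submodule.mem_map_of_mem (HA.tmul_mem_MilnorSub a (HA.commMap_mem_commSub t))

theorem ker_factor_Milnor :
    LinearMap.ker (Submodule.factor HA.Jsub_le_MilnorSub) =
      LinearMap.range (TensorProduct.lift HA.adAct) := by
  rw [Submodule.ker_mapQ, Submodule.comap_id, map_mkQ_MilnorSub]

section AlphaIdentity

variable {HA} (hαid : ∀ a, ∀ t ∈ commSub HA, HA.comm a t = HA.comm (HA.α a) t)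
include hαid

theorem commMap_adAct (a : A) (t : HA.LAlpha) :
    HA.commMap (HA.adAct a t) = HA.comm a (HA.commMap t) := by
  rw [adAct_apply, commMap_mkQ_tmul, ← hαid a _ (HA.commMap_mem_commSub t)]

theorem map_commMap_range_adAct :
    (LinearMap.range (TensorProduct.lift HA.adAct)).map HA.commMap = commSub2 HA := by
  apply le_antisymm
  · rintro _ ⟨_, ⟨x, rfl⟩, rfl⟩
    induction x with
    | zero => simp
    | add x y hx hy => simpa only [map_add] using add_mem hx hy
    | tmul a t =>
      rw [TensorProduct.lift.tmul, commMap_adAct hαid]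
      exact Submodule.subset_span ⟨a, _, HA.commMap_mem_commSub t, rfl⟩
  · refine Submodule.span_le.2 ?_
    rintro _ ⟨a, t, ht, rfl⟩
    obtain ⟨u, rfl⟩ := HA.range_commMap.ge ht
    exact ⟨_, ⟨a ⊗ₜ u, rfl⟩, commMap_adAct hαid a u⟩

end AlphaIdentity

variable {HA}

theorem act_eq_adAct {act : A →ₗ[K] HA.LAlpha →ₗ[K] HA.LAlpha}
    (hact : ∀ a b c, act a ((Jsub HA).mkQ (b ⊗ₜ[K] c)) =
      (Jsub HA).mkQ (HA.comm a b ⊗ₜ[K] HA.α c) + (Jsub HA).mkQ (HA.α b ⊗ₜ[K] HA.comm a c)) :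
    act = HA.adAct := by
  ext a b c
  exact (hact a b c).trans (HA.mkQ_comm_tmul_add a b c)

theorem isEquivariantHom_toCommSub
    (hαid : ∀ a, ∀ t ∈ commSub HA, HA.comm a t = HA.comm (HA.α a) t)
    {HLA : HomLieStr K A} {HL : HomLieStr K HA.LAlpha}
    (hLbr : ∀ a b a' b', HL.br ((Jsub HA).mkQ (a ⊗ₜ[K] b)) ((Jsub HA).mkQ (a' ⊗ₜ[K] b')) =
      (Jsub HA).mkQ (HA.comm a b ⊗ₜ[K] HA.comm a' b'))
    (hLα : ∀ a b, HL.α ((Jsub HA).mkQ (a ⊗ₜ[K] b)) = (Jsub HA).mkQ (HA.α a ⊗ₜ[K] HA.α b))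
    {HC : HomLieStr K (commSub HA)}
    (hCbr : ∀ s t : commSub HA, (HC.br s t : A) = HA.comm s t)
    (hCα : ∀ s : commSub HA, (HC.α s : A) = HA.α s)
    {aAL : HomAction HLA HL} (hAL : aAL.act = HA.adAct)
    {aLA : HomAction HL HLA}
    (hLA : ∀ a b c, aLA.act ((Jsub HA).mkQ (a ⊗ₜ[K] b)) c = HA.comm (HA.comm a b) c)
    {aAC : HomAction HLA HC} (hAC : ∀ (a : A) (t : commSub HA), (aAC.act a t : A) = HA.comm a t)
    {aCA : HomAction HC HLA} (hCA : ∀ (t : commSub HA) (a : A), aCA.act t a = HA.comm t a) :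
    IsEquivariantHom aAL aLA aAC aCA HA.toCommSub where
  isHomLieHom := by
    have map_br : HL.br.compr₂ HA.commMap = HA.comm.compl₁₂ HA.commMap HA.commMap := by
      ext a b a' b'
      exact congrArg HA.commMap (hLbr a b a' b')
    have map_α : HA.commMap ∘ₗ HL.α = HA.α ∘ₗ HA.commMap := by
      ext a b
      exact (congrArg HA.commMap (hLα a b)).trans (HA.α_comm a b).symm
    constructor
    · intro s t
      exact Subtype.ext ((LinearMap.congr_fun₂ map_br s t).trans
        (hCbr (HA.toCommSub s) (HA.toCommSub t)).symm)
    · intro t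
      exact Subtype.ext ((LinearMap.congr_fun map_α t).trans (hCα (HA.toCommSub t)).symm)
  map_act a t := Subtype.ext <| by
    rw [hAC, hAL]
    exact commMap_adAct hαid a t
  act_map t a := by
    have : aLA.act = HA.comm ∘ₗ HA.commMap := by
      ext b c a
      exact hLA b c a
    rw [hCA, this]
    rfl

theorem range_eq_ker_Milnor
    (hαid : ∀ a, ∀ t ∈ commSub HA, HA.comm a t = HA.comm (HA.α a) t)
    {F₄ : LinearMap.ker HA.commMap →ₗ[K] (A ⊗[K] A) ⧸ MilnorSub HA}
    (hF₄ : ∀ t, F₄ t = Submodule.factor HA.Jsub_le_MilnorSub t)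
    {F₅ : (A ⊗[K] A) ⧸ MilnorSub HA →ₗ[K] commSub HA ⧸ (commSub2 HA).comap (commSub HA).subtype}
    (hF₅ : F₅ ∘ₗ Submodule.factor HA.Jsub_le_MilnorSub =
      ((commSub2 HA).comap (commSub HA).subtype).mkQ ∘ₗ HA.toCommSub) :
    LinearMap.range F₄ = LinearMap.ker F₅ := by
  have hker : LinearMap.ker ((commSub2 HA).comap (commSub HA).subtype).mkQ =
      (LinearMap.ker (Submodule.factor HA.Jsub_le_MilnorSub)).map HA.toCommSub := by
    rw [Submodule.ker_mkQ, ker_factor_Milnor, ← map_commMap_range_adAct hαid,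
      ← Submodule.comap_map_eq_of_injective (commSub HA).injective_subtype
        (Submodule.map HA.toCommSub _), ← Submodule.map_comp]
    rfl
  rw [ker_eq_map_ker_of_comp_eq (Submodule.factor_surjective _) hF₅ hker, ker_toCommSub,
    ← LinearMap.range_domRestrict]
  exact congrArg LinearMap.range (LinearMap.ext hF₄)

theorem surjective_of_comp_factor
    {E : Submodule K (commSub HA)} {F : (A ⊗[K] A) ⧸ MilnorSub HA →ₗ[K] commSub HA ⧸ E}
    (hF : F ∘ₗ Submodule.factor HA.Jsub_le_MilnorSub = E.mkQ ∘ₗ HA.toCommSub) :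
    Function.Surjective F := by
  refine .of_comp (g := Submodule.factor HA.Jsub_le_MilnorSub) ?_
  rw [← LinearMap.coe_comp, hF, LinearMap.coe_comp]
  exact E.mkQ_surjective.comp HA.toCommSub_surjective

end HomAssocStr

/-- `F₁` is defined on a quotient `(A ⊗ HC₁^α(A))/D₁`, which is `A⋆HC₁^α(A)` for
`D₁ = D(A, HC₁^α(A))`. -/
theorem statement19_general {K A : Type} [Field K] [AddCommGroup A] [Module K A]
    (HA : HomAssocStr K A)
    (hαid : ∀ a, ∀ t ∈ commSub HA, HA.comm a t = HA.comm (HA.α a) t)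
    (HLA : HomLieStr K A)
    (hHLA : (∀ a b, HLA.br a b = HA.mul a b - HA.mul b a) ∧ HLA.α = HA.α)
    (HLA' : HomLieStr K HA.LAlpha)
    (hHLA' : (∀ a b a' b', HLA'.br ((Jsub HA).mkQ (a ⊗ₜ[K] b)) ((Jsub HA).mkQ (a' ⊗ₜ[K] b')) =
        (Jsub HA).mkQ (HLA.br a b ⊗ₜ[K] HLA.br a' b')) ∧
      (∀ a b, HLA'.α ((Jsub HA).mkQ (a ⊗ₜ[K] b)) = (Jsub HA).mkQ (HA.α a ⊗ₜ[K] HA.α b)))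
    (actALα : HomAction HLA HLA')
    (hactALα : ∀ a' a b, actALα.act a' ((Jsub HA).mkQ (a ⊗ₜ[K] b)) =
        (Jsub HA).mkQ (HLA.br a' a ⊗ₜ[K] HA.α b) + (Jsub HA).mkQ (HA.α a ⊗ₜ[K] HLA.br a' b))
    (actLαA : HomAction HLA' HLA)
    (hactLαA : ∀ a b a', actLαA.act ((Jsub HA).mkQ (a ⊗ₜ[K] b)) a' = HLA.br (HLA.br a b) a')
    (ψ0 : HA.LAlpha →ₗ[K] A)
    (hψ0 : ∀ a b, ψ0 ((Jsub HA).mkQ (a ⊗ₜ[K] b)) = HA.mul a b - HA.mul b a)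
    (HAA : HomLieStr K ↥(commSub HA))
    (hHAA : (∀ s t : ↥(commSub HA), (HAA.br s t : A) = HLA.br (s : A) (t : A)) ∧
            (∀ s : ↥(commSub HA), (HAA.α s : A) = HA.α (s : A)))
    (aA_AA : HomAction HLA HAA)
    (haA_AA : ∀ (a : A) (t : ↥(commSub HA)), (aA_AA.act a t : A) = HLA.br a (t : A))
    (aAA_A : HomAction HAA HLA)
    (haAA_A : ∀ (t : ↥(commSub HA)) (a : A), aAA_A.act t a = HLA.br (t : A) a)
    (ψ₂ : ((A ⊗[K] HA.LAlpha) ⧸ starSub actALα actLαA) →ₗ[K] HA.LAlpha)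
    (hψ₂ : ∀ (a : A) (t : HA.LAlpha),
        ψ₂ ((starSub actALα actLαA).mkQ (a ⊗ₜ[K] t)) = actALα.act a t)
    (ψ₃ : ((A ⊗[K] ↥(commSub HA)) ⧸ starSub aA_AA aAA_A) →ₗ[K] ↥(commSub HA))
    (hψ₃ : ∀ (a : A) (t : ↥(commSub HA)),
        ψ₃ ((starSub aA_AA aAA_A).mkQ (a ⊗ₜ[K] t)) = aA_AA.act a t)
    (G : ((A ⊗[K] HA.LAlpha) ⧸ starSub actALα actLαA) →ₗ[K]
        ((A ⊗[K] ↥(commSub HA)) ⧸ starSub aA_AA aAA_A))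
    (hG : ∀ a b c : A,
        G ((starSub actALα actLαA).mkQ (a ⊗ₜ[K] (Jsub HA).mkQ (b ⊗ₜ[K] c))) =
        (starSub aA_AA aAA_A).mkQ
          (a ⊗ₜ[K] (⟨HA.mul b c - HA.mul c b, Submodule.subset_span ⟨b, c, rfl⟩⟩ :
            ↥(commSub HA))))
    (D₁ : Submodule K (A ⊗[K] ↥(LinearMap.ker ψ0)))
    (F₁ : ((A ⊗[K] ↥(LinearMap.ker ψ0)) ⧸ D₁) →ₗ[K] ↥(LinearMap.ker ψ₂))
    (hF₁ : ∀ (a : A) (h : ↥(LinearMap.ker ψ0))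
        (hm : (starSub actALα actLαA).mkQ (a ⊗ₜ[K] (h : HA.LAlpha)) ∈ LinearMap.ker ψ₂),
        F₁ (D₁.mkQ (a ⊗ₜ[K] h)) =
          ⟨(starSub actALα actLαA).mkQ (a ⊗ₜ[K] (h : HA.LAlpha)), hm⟩)
    (F₂ : ↥(LinearMap.ker ψ₂) →ₗ[K] ↥(LinearMap.ker ψ₃))
    (hF₂ : ∀ x (hx : x ∈ LinearMap.ker ψ₂) (hx' : G x ∈ LinearMap.ker ψ₃),
        F₂ ⟨x, hx⟩ = ⟨G x, hx'⟩)
    (F₃ : ↥(LinearMap.ker ψ₃) →ₗ[K] ↥(LinearMap.ker ψ0))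
    (hF₃ : ∀ y (h : G y ∈ LinearMap.ker ψ₃) (h2 : ψ₂ y ∈ LinearMap.ker ψ0),
        F₃ ⟨G y, h⟩ = ⟨ψ₂ y, h2⟩)
    (F₄ : ↥(LinearMap.ker ψ0) →ₗ[K] ((A ⊗[K] A) ⧸ MilnorSub HA))
    (hF₄ : ∀ (s : A ⊗[K] A) (hs : (Jsub HA).mkQ s ∈ LinearMap.ker ψ0),
        F₄ ⟨(Jsub HA).mkQ s, hs⟩ = (MilnorSub HA).mkQ s)
    (F₅ : ((A ⊗[K] A) ⧸ MilnorSub HA) →ₗ[K]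
        (↥(commSub HA) ⧸ Submodule.comap (commSub HA).subtype (commSub2 HA)))
    (hF₅ : ∀ a b : A, F₅ ((MilnorSub HA).mkQ (a ⊗ₜ[K] b)) =
        Submodule.Quotient.mk
          (⟨HA.mul a b - HA.mul b a, Submodule.subset_span ⟨a, b, rfl⟩⟩ : ↥(commSub HA))) :
    LinearMap.range F₁ = LinearMap.ker F₂ ∧
    LinearMap.range F₂ = LinearMap.ker F₃ ∧
    LinearMap.range F₃ = LinearMap.ker F₄ ∧
    LinearMap.range F₄ = LinearMap.ker F₅ ∧
    Function.Surjective F₅ := by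
  have hbr : HLA.br = HA.comm := LinearMap.ext₂ hHLA.1
  obtain rfl : ψ0 = HA.commMap := by
    ext a b
    exact hψ0 a b
  have hact : actALα.act = HA.adAct :=
    HomAssocStr.act_eq_adAct (by simpa only [hbr] using hactALα)
  have hp : IsEquivariantHom actALα actLαA aA_AA aAA_A HA.toCommSub := by
    simp only [hbr] at hHLA' hactLαA hHAA haA_AA haAA_A
    exact HomAssocStr.isEquivariantHom_toCommSub hαid hHLA'.1 hHLA'.2 hHAA.1 hHAA.2 hact hactLαA
      haA_AA haAA_A
  obtain rfl : G = hp.starMap HA.toCommSub_surjective := by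
    ext a b c
    exact hG a b c
  have hsurj := hp.starMap_surjective HA.toCommSub_surjective
  have hker : (LinearMap.ker ψ₃).comap (hp.starMap HA.toCommSub_surjective) =
      (LinearMap.ker HA.commMap).comap ψ₂ := by
    rw [← LinearMap.ker_comp, hp.comp_starMap _ hψ₂ hψ₃, LinearMap.ker_comp, HA.ker_toCommSub]
  have hδ : IsConnecting (hp.starMap HA.toCommSub_surjective) ψ₂ F₃ := hF₃
  have hψ₂_HC (a : A) (h : LinearMap.ker HA.commMap) :
      (starSub actALα actLαA).mkQ (a ⊗ₜ[K] (h : HA.LAlpha)) ∈ LinearMap.ker ψ₂ := by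
    rw [LinearMap.mem_ker, hψ₂, hact, HA.adAct_of_mem_ker a h.2]
  have hF₂_apply (x : LinearMap.ker ψ₂) :
      (F₂ x : _ ⧸ _) = hp.starMap HA.toCommSub_surjective x :=
    congrArg Subtype.val (hF₂ x x.2 (hp.starMap_mem_ker _ hψ₂ hψ₃ x))
  have hF₄_apply (t : LinearMap.ker HA.commMap) :
      F₄ t = Submodule.factor HA.Jsub_le_MilnorSub t := by
    obtain ⟨⟨s⟩, hs⟩ := t
    exact hF₄ s hs
  have hF₅_comp : F₅ ∘ₗ Submodule.factor HA.Jsub_le_MilnorSub =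
      (Submodule.comap (commSub HA).subtype (commSub2 HA)).mkQ ∘ₗ HA.toCommSub := by
    ext a b
    exact hF₅ a b
  refine ⟨?_, hδ.range_eq_ker hsurj hker hF₂_apply, ?_,
    HomAssocStr.range_eq_ker_Milnor hαid hF₄_apply hF₅_comp,
    HomAssocStr.surjective_of_comp_factor hF₅_comp⟩
  · exact hp.range_eq_ker_of_starMap HA.toCommSub_surjective HA.exact_subtype_toCommSub
      (fun a h => congrArg Subtype.val (hF₁ a h (hψ₂_HC a h))) hF₂_apply
  · ext t
    rw [hδ.range_eq_comap hsurj hker, range_eq_range_lift_act hψ₂, hact, ← HA.ker_factor_Milnor,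
      LinearMap.mem_ker, hF₄_apply]
    rfl

/-- Let `(A, α_A)` be a Hom-associative algebra over a field of
characteristic 0 satisfying the α-identity condition `[a,b] = [α(a),b]`.  Then there is an
exact sequence of vector spaces
`A⋆HC₁^α(A) → Ker(ψ₂ : A⋆L^α(A) → L^α(A)) → Ker(ψ₃ : A⋆[A,A] → [A,A]) → HC₁^α(A) → HC₁^M(A,α_A) → [A,A]/[A,[A,A]] → 0`,
where `ψ₂`, `ψ₃` are the canonical homomorphisms `m⋆n ↦ ᵐn`, the first two maps are
induced by the inclusion `HC₁^α(A) ↪ L^α(A)` and the projection `L^α(A) ↠ [A,A]`, the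
third map is the connecting homomorphism of the snake lemma, and the last two maps are
the canonical projections. -/
theorem statement19 {K A : Type} [Field K] [CharZero K] [AddCommGroup A] [Module K A]
    (HA : HomAssocStr K A)
    -- the α-identity condition
    (hαid : ∀ a b, HA.mul a b - HA.mul b a = HA.mul (HA.α a) b - HA.mul b (HA.α a))
    -- the commutator Hom-Lie structure on A
    (HLA : HomLieStr K A)
    (hHLA : (∀ a b, HLA.br a b = HA.mul a b - HA.mul b a) ∧ HLA.α = HA.α)
    -- the Hom-Lie structure of L^α(A)
    (HLA' : HomLieStr K ((A ⊗[K] A) ⧸ Jsub HA))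
    (hHLA' : (∀ a b a' b', HLA'.br ((Jsub HA).mkQ (a ⊗ₜ[K] b)) ((Jsub HA).mkQ (a' ⊗ₜ[K] b')) =
        (Jsub HA).mkQ (HLA.br a b ⊗ₜ[K] HLA.br a' b')) ∧
      (∀ a b, HLA'.α ((Jsub HA).mkQ (a ⊗ₜ[K] b)) = (Jsub HA).mkQ (HA.α a ⊗ₜ[K] HA.α b)))
    -- the Hom-actions of A and L^α(A) on each other
    (actALα : HomAction HLA HLA')
    (hactALα : ∀ a' a b, actALα.act a' ((Jsub HA).mkQ (a ⊗ₜ[K] b)) =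
        (Jsub HA).mkQ (HLA.br a' a ⊗ₜ[K] HA.α b) + (Jsub HA).mkQ (HA.α a ⊗ₜ[K] HLA.br a' b))
    (actLαA : HomAction HLA' HLA)
    (hactLαA : ∀ a b a', actLαA.act ((Jsub HA).mkQ (a ⊗ₜ[K] b)) a' = HLA.br (HLA.br a b) a')
    -- ψ : L^α(A) → [A,A] ⊆ A, a⊗b ↦ ab − ba, whose kernel is HC₁^α(A)
    (ψ0 : ((A ⊗[K] A) ⧸ Jsub HA) →ₗ[K] A)
    (hψ0 : ∀ a b, ψ0 ((Jsub HA).mkQ (a ⊗ₜ[K] b)) = HA.mul a b - HA.mul b a)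
    -- the Hom-Lie structure on the ideal [A,A] of A, and the actions between A and [A,A]
    (HAA : HomLieStr K ↥(commSub HA))
    (hHAA : (∀ s t : ↥(commSub HA), (HAA.br s t : A) = HLA.br (s : A) (t : A)) ∧
            (∀ s : ↥(commSub HA), (HAA.α s : A) = HA.α (s : A)))
    (aA_AA : HomAction HLA HAA)
    (haA_AA : ∀ (a : A) (t : ↥(commSub HA)), (aA_AA.act a t : A) = HLA.br a (t : A))
    (aAA_A : HomAction HAA HLA)
    (haAA_A : ∀ (t : ↥(commSub HA)) (a : A), aAA_A.act t a = HLA.br (t : A) a)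
    -- the abelian Hom-Lie structure on HC₁^α(A) = Ker ψ0, and the actions between A and it
    (HHC : HomLieStr K ↥(LinearMap.ker ψ0))
    (hHHC : (∀ s t, HHC.br s t = 0) ∧
            (∀ s : ↥(LinearMap.ker ψ0),
              (HHC.α s : (A ⊗[K] A) ⧸ Jsub HA) = HLA'.α (s : (A ⊗[K] A) ⧸ Jsub HA)))
    (aA_HC : HomAction HLA HHC)
    (haA_HC : ∀ (a : A) (h : ↥(LinearMap.ker ψ0)),
        (aA_HC.act a h : (A ⊗[K] A) ⧸ Jsub HA) = actALα.act a (h : (A ⊗[K] A) ⧸ Jsub HA))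
    (aHC_A : HomAction HHC HLA)
    (haHC_A : ∀ (h : ↥(LinearMap.ker ψ0)) (a : A),
        aHC_A.act h a = actLαA.act (h : (A ⊗[K] A) ⧸ Jsub HA) a)
    -- the canonical homomorphisms ψ₂ : A⋆L^α(A) → L^α(A) and ψ₃ : A⋆[A,A] → [A,A]
    (ψ₂ : ((A ⊗[K] ((A ⊗[K] A) ⧸ Jsub HA)) ⧸
        Dsub HLA.br HLA.α HLA'.br HLA'.α actALα.act actLαA.act) →ₗ[K]
        ((A ⊗[K] A) ⧸ Jsub HA))
    (hψ₂ : ∀ (a : A) (t : (A ⊗[K] A) ⧸ Jsub HA),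
        ψ₂ ((Dsub HLA.br HLA.α HLA'.br HLA'.α actALα.act actLαA.act).mkQ (a ⊗ₜ[K] t)) =
        actALα.act a t)
    (ψ₃ : ((A ⊗[K] ↥(commSub HA)) ⧸
        Dsub HLA.br HLA.α HAA.br HAA.α aA_AA.act aAA_A.act) →ₗ[K] ↥(commSub HA))
    (hψ₃ : ∀ (a : A) (t : ↥(commSub HA)),
        ψ₃ ((Dsub HLA.br HLA.α HAA.br HAA.α aA_AA.act aAA_A.act).mkQ (a ⊗ₜ[K] t)) =
        aA_AA.act a t)
    -- the homomorphism A⋆L^α(A) → A⋆[A,A] induced by the projection L^α(A) ↠ [A,A]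
    (G : ((A ⊗[K] ((A ⊗[K] A) ⧸ Jsub HA)) ⧸
        Dsub HLA.br HLA.α HLA'.br HLA'.α actALα.act actLαA.act) →ₗ[K]
        ((A ⊗[K] ↥(commSub HA)) ⧸ Dsub HLA.br HLA.α HAA.br HAA.α aA_AA.act aAA_A.act))
    (hG : ∀ a b c : A,
        G ((Dsub HLA.br HLA.α HLA'.br HLA'.α actALα.act actLαA.act).mkQ
            (a ⊗ₜ[K] (Jsub HA).mkQ (b ⊗ₜ[K] c))) =
        (Dsub HLA.br HLA.α HAA.br HAA.α aA_AA.act aAA_A.act).mkQ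
          (a ⊗ₜ[K] (⟨HA.mul b c - HA.mul c b, Submodule.subset_span ⟨b, c, rfl⟩⟩ :
            ↥(commSub HA))))
    -- the maps of the six-term sequence
    (F₁ : ((A ⊗[K] ↥(LinearMap.ker ψ0)) ⧸
        Dsub HLA.br HLA.α HHC.br HHC.α aA_HC.act aHC_A.act) →ₗ[K] ↥(LinearMap.ker ψ₂))
    (hF₁ : ∀ (a : A) (h : ↥(LinearMap.ker ψ0))
        (hm : (Dsub HLA.br HLA.α HLA'.br HLA'.α actALα.act actLαA.act).mkQ
            (a ⊗ₜ[K] (h : (A ⊗[K] A) ⧸ Jsub HA)) ∈ LinearMap.ker ψ₂),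
        F₁ ((Dsub HLA.br HLA.α HHC.br HHC.α aA_HC.act aHC_A.act).mkQ (a ⊗ₜ[K] h)) =
          ⟨(Dsub HLA.br HLA.α HLA'.br HLA'.α actALα.act actLαA.act).mkQ
            (a ⊗ₜ[K] (h : (A ⊗[K] A) ⧸ Jsub HA)), hm⟩)
    (F₂ : ↥(LinearMap.ker ψ₂) →ₗ[K] ↥(LinearMap.ker ψ₃))
    (hF₂ : ∀ x (hx : x ∈ LinearMap.ker ψ₂) (hx' : G x ∈ LinearMap.ker ψ₃),
        F₂ ⟨x, hx⟩ = ⟨G x, hx'⟩)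
    (F₃ : ↥(LinearMap.ker ψ₃) →ₗ[K] ↥(LinearMap.ker ψ0))
    (hF₃ : ∀ y (h : G y ∈ LinearMap.ker ψ₃) (h2 : ψ₂ y ∈ LinearMap.ker ψ0),
        F₃ ⟨G y, h⟩ = ⟨ψ₂ y, h2⟩)
    (F₄ : ↥(LinearMap.ker ψ0) →ₗ[K] ((A ⊗[K] A) ⧸ MilnorSub HA))
    (hF₄ : ∀ (s : A ⊗[K] A) (hs : (Jsub HA).mkQ s ∈ LinearMap.ker ψ0),
        F₄ ⟨(Jsub HA).mkQ s, hs⟩ = (MilnorSub HA).mkQ s)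
    (F₅ : ((A ⊗[K] A) ⧸ MilnorSub HA) →ₗ[K]
        (↥(commSub HA) ⧸ Submodule.comap (commSub HA).subtype (commSub2 HA)))
    (hF₅ : ∀ a b : A, F₅ ((MilnorSub HA).mkQ (a ⊗ₜ[K] b)) =
        Submodule.Quotient.mk
          (⟨HA.mul a b - HA.mul b a, Submodule.subset_span ⟨a, b, rfl⟩⟩ : ↥(commSub HA))) :
    LinearMap.range F₁ = LinearMap.ker F₂ ∧
    LinearMap.range F₂ = LinearMap.ker F₃ ∧
    LinearMap.range F₃ = LinearMap.ker F₄ ∧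
    LinearMap.range F₄ = LinearMap.ker F₅ ∧
    Function.Surjective F₅ :=
  statement19_general HA (fun a t _ => hαid a t) HLA hHLA HLA' hHLA' actALα hactALα actLαA hactLαA
    ψ0 hψ0 HAA hHAA aA_AA haA_AA aAA_A haAA_A ψ₂ hψ₂ ψ₃ hψ₃ G hG _ F₁ hF₁ F₂ hF₂ F₃ hF₃ F₄ hF₄
    F₅ hF₅
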